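/- arXiv:2204.03451 — 2 statements merged into one kernel-verified Lean document; each statement's English description precedes it below -/
import Mathlib

section
/- Let g : [-1,1] → ℝ be continuous. Then √ε · ∫_{-1}^{1} g(a)/(1 + (ε-1)a²)^{3/2} da tends to g(-1) + g(1) as ε → 0⁺. -/
open Real MeasureTheory Filter

/-!
For `ε > 0` the kernel `√ε / (1 + (ε - 1) a²) ^ (3 / 2)` has the antiderivative
`√ε a / √(1 + (ε - 1) a²)`, so its mass on `[0, 1]` is exactly `1`. Since
`1 + (ε - 1) a² ≥ 1 - a²`, the kernel tends to `0` uniformly away from `a = ±1` as `ε → 0⁺`. Hence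
its restriction to `(0, 1)` is an approximate identity at the endpoint `1`, and by evenness its
restriction to `(-1, 0)` is one at `-1`.
-/

open scoped Topology

theorem hasDerivAt_div_sqrt_one_add_mul_sq {c x : ℝ} (h : 0 < 1 + c * x ^ 2) :
    HasDerivAt (fun y => y / √(1 + c * y ^ 2)) (1 / (1 + c * x ^ 2) ^ ((3 : ℝ) / 2)) x := by
  have hquad : HasDerivAt (fun y : ℝ => 1 + c * y ^ 2) (c * (2 * x)) x := by
    simpa using ((hasDerivAt_pow 2 x).const_mul c).const_add 1
  have hsqrt : 0 < √(1 + c * x ^ 2) := sqrt_pos.2 h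
  have hrpow : (1 + c * x ^ 2) ^ ((3 : ℝ) / 2) = √(1 + c * x ^ 2) ^ 3 := by
    rw [sqrt_eq_rpow, ← rpow_mul_natCast h.le]
    norm_num
  refine ((hasDerivAt_id x).div (hquad.sqrt h.ne') hsqrt.ne').congr_deriv ?_
  rw [hrpow, id]
  field_simp
  rw [sq_sqrt h.le]
  ring

section EndpointKernel

variable {ε a : ℝ}

/-- The kernel `a ↦ √ε / (1 + (ε - 1) a²) ^ (3 / 2)` on `[-1, 1]`, whose mass concentrates at the
endpoints `±1` as `ε → 0⁺`. -/
noncomputable def endpointKernel (ε a : ℝ) : ℝ :=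
  √ε / (1 + (ε - 1) * a ^ 2) ^ ((3 : ℝ) / 2)

theorem endpointKernel_neg (ε a : ℝ) : endpointKernel ε (-a) = endpointKernel ε a := by
  simp only [endpointKernel, neg_sq]

theorem one_sub_sq_le_one_add_sub_one_mul_sq (hε : 0 ≤ ε) (a : ℝ) :
    1 - a ^ 2 ≤ 1 + (ε - 1) * a ^ 2 := by
  linarith [mul_nonneg hε (sq_nonneg a)]

theorem one_add_sub_one_mul_sq_pos (hε : 0 < ε) (ha : a ^ 2 ≤ 1) :
    0 < 1 + (ε - 1) * a ^ 2 := by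
  rcases ha.lt_or_eq with ha | ha
  · exact (sub_pos.2 ha).trans_le (one_sub_sq_le_one_add_sub_one_mul_sq hε.le a)
  · rwa [ha, mul_one, add_sub_cancel]

theorem endpointKernel_nonneg (hε : 0 < ε) (ha : a ^ 2 ≤ 1) : 0 ≤ endpointKernel ε a :=
  div_nonneg (sqrt_nonneg ε) (rpow_nonneg (one_add_sub_one_mul_sq_pos hε ha).le _)

theorem endpointKernel_le_of_sq_le {c : ℝ} (hε : 0 ≤ ε) (hc : c < 1) (ha : a ^ 2 ≤ c) :
    endpointKernel ε a ≤ √ε / (1 - c) ^ ((3 : ℝ) / 2) := by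
  have : 0 < 1 - c := sub_pos.2 hc
  have hle : 1 - c ≤ 1 + (ε - 1) * a ^ 2 :=
    (sub_le_sub_left ha 1).trans (one_sub_sq_le_one_add_sub_one_mul_sq hε a)
  unfold endpointKernel
  gcongr

theorem continuousOn_endpointKernel (hε : 0 < ε) :
    ContinuousOn (endpointKernel ε) (Set.Icc (-1) 1) := by
  have hpos : ∀ a ∈ Set.Icc (-1 : ℝ) 1, 0 < 1 + (ε - 1) * a ^ 2 := fun a ha =>
    one_add_sub_one_mul_sq_pos hε ((sq_le_one_iff_abs_le_one a).2 (abs_le.2 ha))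
  exact continuousOn_const.div
    (ContinuousOn.rpow_const (by fun_prop) fun a ha => .inl (hpos a ha).ne')
    fun a ha => (rpow_pos_of_pos (hpos a ha) _).ne'

theorem tendstoUniformlyOn_endpointKernel_zero {c : ℝ} (hc : c < 1) :
    TendstoUniformlyOn endpointKernel 0 (𝓝[>] 0) {a | a ^ 2 ≤ c} := by
  have hbound : Tendsto (fun ε : ℝ => √ε / (1 - c) ^ ((3 : ℝ) / 2)) (𝓝[>] 0) (𝓝 0) := by
    have hcont : Continuous fun ε : ℝ => √ε / (1 - c) ^ ((3 : ℝ) / 2) := by fun_prop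
    simpa only [sqrt_zero, zero_div] using (hcont.tendsto 0).mono_left nhdsWithin_le_nhds
  rw [Metric.tendstoUniformlyOn_iff]
  intro η hη
  filter_upwards [self_mem_nhdsWithin, hbound.eventually_lt_const hη] with ε hε hlt a ha
  rw [Pi.zero_apply, dist_zero_left, norm_of_nonneg (endpointKernel_nonneg hε (ha.trans hc.le))]
  exact (endpointKernel_le_of_sq_le (le_of_lt hε) hc ha).trans_lt hlt

theorem integral_endpointKernel (hε : 0 < ε) : ∫ a in (0 : ℝ)..1, endpointKernel ε a = 1 := by
  have hsub : Set.uIcc (0 : ℝ) 1 ⊆ Set.Icc (-1) 1 := Set.uIcc_subset_Icc (by simp) (by simp)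
  have hderiv : ∀ a ∈ Set.uIcc (0 : ℝ) 1,
      HasDerivAt (fun a => √ε * (a / √(1 + (ε - 1) * a ^ 2))) (endpointKernel ε a) a := by
    intro a ha
    have hsq : a ^ 2 ≤ 1 := (sq_le_one_iff_abs_le_one a).2 (abs_le.2 (hsub ha))
    simpa only [endpointKernel, mul_one_div] using
      (hasDerivAt_div_sqrt_one_add_mul_sq (one_add_sub_one_mul_sq_pos hε hsq)).const_mul √ε
  rw [intervalIntegral.integral_eq_sub_of_hasDerivAt hderiv
    ((continuousOn_endpointKernel hε).mono hsub).intervalIntegrable]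
  simp [(sqrt_pos.2 hε).ne']

theorem tendstoUniformlyOn_endpointKernel_Ioo_diff {u : Set ℝ} (hu : u ∈ 𝓝 1) :
    TendstoUniformlyOn endpointKernel 0 (𝓝[>] 0) (Set.Ioo 0 1 \ u) := by
  obtain ⟨δ, hδ, hball⟩ := Metric.mem_nhds_iff.1 hu
  refine (tendstoUniformlyOn_endpointKernel_zero (sub_lt_self 1 hδ)).mono ?_
  rintro a ⟨⟨ha0, ha1⟩, hau⟩
  have hdist : δ ≤ 1 - a := by
    simpa [dist_comm a, Real.dist_eq, abs_of_pos (sub_pos.2 ha1)] using mt (@hball a) hau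
  calc a ^ 2 ≤ a := pow_le_of_le_one ha0.le ha1.le two_ne_zero
    _ ≤ 1 - δ := le_sub_comm.1 hdist

end EndpointKernel

section Concentration

variable {E : Type*} [NormedAddCommGroup E] [NormedSpace ℝ E] {g : ℝ → E}

theorem integral_endpointKernel_smul_eq_add {ε : ℝ} (hε : 0 < ε)
    (hg : IntervalIntegrable g volume (-1) 1) :
    ∫ a in (-1 : ℝ)..1, endpointKernel ε a • g a =
      (∫ a in (0 : ℝ)..1, endpointKernel ε a • g (-a)) +
        ∫ a in (0 : ℝ)..1, endpointKernel ε a • g a := by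
  have hint : IntervalIntegrable (fun a => endpointKernel ε a • g a) volume (-1) 1 := by
    refine hg.continuousOn_smul ?_
    rw [Set.uIcc_of_le (neg_le_self zero_le_one)]
    exact continuousOn_endpointKernel hε
  have hreflect : ∫ a in (0 : ℝ)..1, endpointKernel ε a • g (-a) =
      ∫ a in (-1 : ℝ)..0, endpointKernel ε a • g a := by
    simpa only [endpointKernel_neg, neg_zero] using
      intervalIntegral.integral_comp_neg (a := 0) (b := 1) fun a => endpointKernel ε a • g a
  rw [hreflect, intervalIntegral.integral_add_adjacent_intervals]
  · exact hint.mono_set (Set.uIcc_subset_uIcc (by simp) (by simp))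
  · exact hint.mono_set (Set.uIcc_subset_uIcc (by simp) (by simp))

variable [CompleteSpace E]

theorem tendsto_integral_endpointKernel_smul {r : E}
    (hg : IntervalIntegrable g volume 0 1) (hr : Tendsto g (𝓝[<] 1) (𝓝 r)) :
    Tendsto (fun ε => ∫ a in (0 : ℝ)..1, endpointKernel ε a • g a) (𝓝[>] 0) (𝓝 r) := by
  have hsub : Set.Ioo (0 : ℝ) 1 ⊆ Set.Icc (-1) 1 :=
    Set.Ioo_subset_Icc_self.trans (Set.Icc_subset_Icc_left (by norm_num))
  have hnonneg : ∀ᶠ ε in 𝓝[>] 0, ∀ a ∈ Set.Ioo (0 : ℝ) 1, 0 ≤ endpointKernel ε a := by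
    filter_upwards [self_mem_nhdsWithin] with ε hε a ha
    exact endpointKernel_nonneg hε (pow_le_one₀ ha.1.le ha.2.le)
  have hmass : Tendsto (fun ε => ∫ a in Set.Ioo (0 : ℝ) 1, endpointKernel ε a) (𝓝[>] 0) (𝓝 1) := by
    refine tendsto_const_nhds.congr' ?_
    filter_upwards [self_mem_nhdsWithin] with ε hε
    rw [← integral_Ioc_eq_integral_Ioo, ← intervalIntegral.integral_of_le zero_le_one,
      integral_endpointKernel hε]
  have hmeas : ∀ᶠ ε in 𝓝[>] 0,
      AEStronglyMeasurable (endpointKernel ε) (volume.restrict (Set.Ioo 0 1)) := by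
    filter_upwards [self_mem_nhdsWithin] with ε hε
    exact ((continuousOn_endpointKernel hε).mono hsub).aestronglyMeasurable measurableSet_Ioo
  simp only [intervalIntegral.integral_of_le zero_le_one, integral_Ioc_eq_integral_Ioo]
  exact tendsto_setIntegral_peak_smul_of_integrableOn_of_tendsto measurableSet_Ioo
    measurableSet_Ioo subset_rfl self_mem_nhdsWithin measure_Ioo_lt_top.ne hnonneg
    (fun u hu hu1 => tendstoUniformlyOn_endpointKernel_Ioo_diff (hu.mem_nhds hu1)) hmass hmeas
    ((intervalIntegrable_iff_integrableOn_Ioo_of_le zero_le_one).1 hg)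
    (by rwa [nhdsWithin_Ioo_eq_nhdsLT zero_lt_one])

theorem stmt_5_general {l r : E} (hg : IntervalIntegrable g volume (-1) 1)
    (hl : Tendsto g (𝓝[>] (-1)) (𝓝 l)) (hr : Tendsto g (𝓝[<] 1) (𝓝 r)) :
    Tendsto (fun ε : ℝ =>
        √ε • ∫ a in (-1 : ℝ)..1, ((1 + (ε - 1) * a ^ 2) ^ ((3 : ℝ) / 2))⁻¹ • g a)
      (𝓝[>] 0) (𝓝 (l + r)) := by
  have hg_right : IntervalIntegrable g volume 0 1 :=
    hg.mono_set (Set.uIcc_subset_uIcc (by simp) (by simp))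
  have hg_left : IntervalIntegrable (fun a => g (-a)) volume 0 1 := by
    have hg' : IntervalIntegrable g volume 0 (-1) :=
      hg.mono_set (Set.uIcc_subset_uIcc (by simp) (by simp))
    simpa only [neg_zero, neg_neg] using (IntervalIntegrable.iff_comp_neg).1 hg'
  refine ((tendsto_integral_endpointKernel_smul hg_left (hl.comp tendsto_neg_nhdsLT)).add
    (tendsto_integral_endpointKernel_smul hg_right hr)).congr' ?_
  filter_upwards [self_mem_nhdsWithin] with ε hε
  rw [← integral_endpointKernel_smul_eq_add hε hg, ← intervalIntegral.integral_smul]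
  simp only [smul_smul, endpointKernel, div_eq_mul_inv (√ε)]

end Concentration

theorem stmt_5 (g : ℝ → ℝ) (hg : ContinuousOn g (Set.Icc (-1) 1)) :
    Tendsto (fun ε : ℝ =>
        Real.sqrt ε * ∫ a in (-1 : ℝ)..1, g a / (1 + (ε - 1) * a ^ 2) ^ ((3 : ℝ) / 2))
      (nhdsWithin 0 (Set.Ioi 0)) (nhds (g (-1) + g 1)) := by
  have hlt : (-1 : ℝ) < 1 := by norm_num
  simpa only [smul_eq_mul, div_eq_inv_mul] using stmt_5_general
    (hg.intervalIntegrable_of_Icc hlt.le)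
    ((hg (-1) (Set.left_mem_Icc.2 hlt.le)).mono_of_mem_nhdsWithin (Icc_mem_nhdsGT hlt))
    ((hg 1 (Set.right_mem_Icc.2 hlt.le)).mono_of_mem_nhdsWithin (Icc_mem_nhdsLT hlt))
end

section
/- Let c₁ < c₂ be real numbers, let f : [c₁,c₂] → ℝ be continuous, and let ψ : [c₁,c₂] → ℝ be continuously differentiable with ψ(c₂) = 0 and ψ'(t) ≠ 0 for all t ∈ [c₁,c₂]. Then ∫_{c₁}^{c₂} √ε · f(t)/(ε + (1-ε)ψ(t)²) dt tends to (π/2) · f(c₂)/|ψ'(c₂)| as ε → 0⁺. -/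
open Real MeasureTheory Filter

open Set (Icc Ico Ioc Ioo)
open scoped Topology

/-! As `ε → 0⁺` the kernel `k(ε, y) = √ε / (ε + (1 - ε) y²)` concentrates at `y = 0`, with mass
tending to `π / 2` on each side. For a linear function `ψ t = a (t - c₂)` the mass of `k(ε, ψ)` on
`[c₁, c₂]` is an explicit arctangent tending to `π / (2 |a|)`, so up to this factor `k(ε, ψ)` is an
approximate identity at `c₂`.

If `ψ` has derivative `a ≠ 0` at its only zero `c₂`, write `ψ t = (t - c₂) q t` with `q` continuous
and nonvanishing, `q c₂ = a`. Then `k(ε, ψ)` differs from the kernel of the linear function by at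
most `|(a / q)² - 1|` times the latter, uniformly in `ε`. This factor vanishes at `c₂`, so a second
use of the approximate identity shows that the error is negligible. -/

/-- The kernel `y ↦ √ε / (ε + (1 - ε) y²)` of the boundary integral: for `0 < ε < 1` a multiple of
the Cauchy density of width `√(ε / (1 - ε))`, normalised so that its mass on each half-line tends to
`π / 2` as `ε → 0⁺`. -/
noncomputable def peakKernel (ε y : ℝ) : ℝ := √ε / (ε + (1 - ε) * y ^ 2)

namespace peakKernel

variable {ε a c₁ c₂ : ℝ}

lemma denom_pos (hε : ε ∈ Ioo 0 1) (y : ℝ) : 0 < ε + (1 - ε) * y ^ 2 :=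
  add_pos_of_pos_of_nonneg hε.1 (mul_nonneg (sub_nonneg.2 hε.2.le) (sq_nonneg y))

lemma nonneg (hε : ε ∈ Ioo 0 1) (y : ℝ) : 0 ≤ peakKernel ε y :=
  div_nonneg (sqrt_nonneg ε) (denom_pos hε y).le

protected lemma continuous (hε : ε ∈ Ioo 0 1) : Continuous (peakKernel ε) :=
  Continuous.div (by fun_prop) (by fun_prop) fun y => (denom_pos hε y).ne'

lemma abs_mul_eq (ε a y : ℝ) : peakKernel ε (|a| * y) = peakKernel ε (a * y) := by
  simp only [peakKernel, mul_pow, sq_abs]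

lemma eq_inv_one_add_sq (hε : ε ∈ Ioo 0 1) (y : ℝ) :
    peakKernel ε y = (√ε)⁻¹ * (1 + (√(1 - ε) / √ε * y) ^ 2)⁻¹ := by
  have hε₀ : 0 < ε := hε.1
  have hden : ε * (1 + (√(1 - ε) / √ε * y) ^ 2) = ε + (1 - ε) * y ^ 2 := by
    rw [mul_pow, div_pow, sq_sqrt hε₀.le, sq_sqrt (sub_nonneg.2 hε.2.le)]
    field_simp
  rw [peakKernel, ← hden, ← div_div, sqrt_div_self', one_div, div_eq_mul_inv]

lemma integral_linear (hε : ε ∈ Ioo 0 1) (ha : a ≠ 0) (c₁ c₂ : ℝ) :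
    ∫ t in c₁..c₂, peakKernel ε (a * (t - c₂)) =
      arctan (√(1 - ε) * (a * (c₂ - c₁)) / √ε) / (√(1 - ε) * a) := by
  have hsqrt : √ε ≠ 0 := (sqrt_pos.2 hε.1).ne'
  have hsqrt' : √(1 - ε) ≠ 0 := (sqrt_pos.2 (sub_pos.2 hε.2)).ne'
  set b := √(1 - ε) / √ε * a with hb
  have hb₀ : b ≠ 0 := by positivity
  have hscale (t : ℝ) : peakKernel ε (a * (t - c₂)) = (√ε)⁻¹ * (1 + (b * t - b * c₂) ^ 2)⁻¹ := by
    rw [eq_inv_one_add_sq hε, ← mul_assoc, ← hb, mul_sub]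
  calc ∫ t in c₁..c₂, peakKernel ε (a * (t - c₂))
      = (√ε)⁻¹ * (b⁻¹ * (arctan 0 - arctan (-(b * (c₂ - c₁))))) := by
        simp only [hscale, intervalIntegral.integral_const_mul]
        rw [intervalIntegral.integral_comp_mul_sub (fun x => (1 + x ^ 2)⁻¹) hb₀,
          integral_inv_one_add_sq, smul_eq_mul]
        ring_nf
    _ = _ := by
        rw [arctan_zero, arctan_neg, hb]
        field_simp
        ring_nf

lemma tendsto_integral_linear (ha : a ≠ 0) (hc : c₁ < c₂) :
    Tendsto (fun ε => ∫ t in c₁..c₂, peakKernel ε (a * (t - c₂))) (𝓝[>] 0)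
      (𝓝 (π / (2 * |a|))) := by
  have ha' : 0 < |a| := abs_pos.2 ha
  have hnum : Tendsto (fun ε : ℝ => √(1 - ε)) (𝓝[>] 0) (𝓝 1) := by
    have hcont : Continuous fun ε : ℝ => √(1 - ε) := by fun_prop
    simpa using (hcont.tendsto 0).mono_left nhdsWithin_le_nhds
  have hsqrt : Tendsto (fun ε : ℝ => √ε) (𝓝[>] 0) (𝓝[>] 0) := by
    refine tendsto_nhdsWithin_iff.2 ⟨?_, ?_⟩
    · simpa using (continuous_sqrt.tendsto 0).mono_left nhdsWithin_le_nhds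
    · filter_upwards [self_mem_nhdsWithin] with ε hε using sqrt_pos.2 hε
  have harg : Tendsto (fun ε : ℝ => √(1 - ε) * (|a| * (c₂ - c₁)) / √ε) (𝓝[>] 0) atTop :=
    (hnum.mul_const _).pos_mul_atTop (by simpa using mul_pos ha' (sub_pos.2 hc))
      (tendsto_inv_nhdsGT_zero.comp hsqrt)
  have hlim := ((tendsto_arctan_atTop.mono_right nhdsWithin_le_nhds).comp harg).div
    (hnum.mul_const |a|) (by simpa using ha)
  rw [div_div, one_mul] at hlim
  refine hlim.congr' ?_
  filter_upwards [Ioo_mem_nhdsGT one_pos] with ε hε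
  have hmass := integral_linear hε ha'.ne' c₁ c₂
  simp only [abs_mul_eq] at hmass
  exact hmass.symm

lemma tendstoUniformlyOn_zero {η : ℝ} (hη : 0 < η) :
    TendstoUniformlyOn peakKernel 0 (𝓝[>] 0) {y | η ≤ |y|} := by
  have hbound : Tendsto (fun ε : ℝ => √ε / ((1 - ε) * η ^ 2)) (𝓝[>] 0) (𝓝 0) := by
    have hcont : ContinuousAt (fun ε : ℝ => √ε / ((1 - ε) * η ^ 2)) 0 :=
      ContinuousAt.div (by fun_prop) (by fun_prop) (by simp [hη.ne'])
    simpa [ContinuousAt] using hcont.tendsto.mono_left nhdsWithin_le_nhds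
  rw [Metric.tendstoUniformlyOn_iff]
  intro δ hδ
  filter_upwards [Ioo_mem_nhdsGT one_pos, hbound.eventually_lt_const hδ] with ε hε hlt y hy
  rw [Pi.zero_apply, dist_zero_left, norm_of_nonneg (nonneg hε y)]
  have h1ε : 0 < 1 - ε := sub_pos.2 hε.2
  have hηy : η ^ 2 ≤ y ^ 2 := sq_le_sq.2 (by rwa [abs_of_pos hη])
  refine lt_of_le_of_lt ?_ hlt
  unfold peakKernel
  gcongr
  nlinarith [hε.1, mul_le_mul_of_nonneg_left hηy h1ε.le]

lemma tendstoUniformlyOn_linear_zero (ha : a ≠ 0) {u : Set ℝ} (hu : u ∈ 𝓝 c₂) :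
    TendstoUniformlyOn (fun ε t => peakKernel ε (a * (t - c₂))) 0 (𝓝[>] 0) uᶜ := by
  obtain ⟨r, hr, hball⟩ := Metric.mem_nhds_iff.1 hu
  refine ((tendstoUniformlyOn_zero (mul_pos (abs_pos.2 ha) hr)).comp
    fun t => a * (t - c₂)).mono fun t ht => ?_
  have hrt : r ≤ |t - c₂| := not_lt.1 fun h => ht (hball h)
  calc |a| * r ≤ |a| * |t - c₂| := by gcongr
    _ = |a * (t - c₂)| := (abs_mul _ _).symm

lemma abs_sub_le (hε : ε ∈ Ioo 0 1) (x a : ℝ) {q : ℝ} (hq : q ≠ 0) :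
    |peakKernel ε (x * q) - peakKernel ε (a * x)| ≤
      peakKernel ε (a * x) * |(a / q) ^ 2 - 1| := by
  set D := ε + (1 - ε) * (x * q) ^ 2 with hD
  have hDpos : 0 < D := denom_pos hε _
  have hcancel : (1 - ε) * (x * q) ^ 2 / D ≤ 1 := (div_le_one hDpos).2 (by linarith [hε.1])
  have hdiff : peakKernel ε (x * q) - peakKernel ε (a * x) =
      peakKernel ε (a * x) * ((1 - ε) * (x * q) ^ 2 / D) * ((a / q) ^ 2 - 1) := by
    set A := ε + (1 - ε) * (a * x) ^ 2 with hA
    have hApos : 0 < A := denom_pos hε _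
    rw [peakKernel, peakKernel, ← hD, ← hA]
    field_simp
    rw [hA, hD]
    ring
  have hfactor : 0 ≤ (1 - ε) * (x * q) ^ 2 / D :=
    div_nonneg (mul_nonneg (sub_nonneg.2 hε.2.le) (sq_nonneg _)) hDpos.le
  rw [hdiff, abs_mul, abs_of_nonneg (mul_nonneg (nonneg hε _) hfactor)]
  gcongr
  exact mul_le_of_le_one_right (nonneg hε _) hcancel

variable {E : Type*} [NormedAddCommGroup E] [NormedSpace ℝ E] {f : ℝ → E}

lemma norm_integral_sub_mul_smul_sub_le (hε : ε ∈ Ioo 0 1) (hc : c₁ ≤ c₂) (a : ℝ) {q : ℝ → ℝ}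
    (hq : ContinuousOn q (Icc c₁ c₂)) (hq₀ : ∀ t ∈ Icc c₁ c₂, q t ≠ 0)
    (hf : IntervalIntegrable f volume c₁ c₂) :
    ‖(∫ t in c₁..c₂, peakKernel ε ((t - c₂) * q t) • f t) -
        ∫ t in c₁..c₂, peakKernel ε (a * (t - c₂)) • f t‖ ≤
      ∫ t in c₁..c₂, peakKernel ε (a * (t - c₂)) • (|(a / q t) ^ 2 - 1| * ‖f t‖) := by
  rw [← Set.uIcc_of_le hc] at hq hq₀
  have hk := peakKernel.continuous hε
  have hint {y : ℝ → ℝ} (hy : ContinuousOn y (Set.uIcc c₁ c₂)) :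
      IntervalIntegrable (fun t => peakKernel ε (y t) • f t) volume c₁ c₂ :=
    hf.continuousOn_smul (hk.comp_continuousOn hy)
  have hr : ContinuousOn (fun t => |(a / q t) ^ 2 - 1|) (Set.uIcc c₁ c₂) :=
    (((continuousOn_const.div hq hq₀).pow 2).sub continuousOn_const).abs
  rw [← intervalIntegral.integral_sub (hint (by fun_prop)) (hint (by fun_prop))]
  refine intervalIntegral.norm_integral_le_of_norm_le hc (ae_of_all _ fun t ht => ?_)
    ((hf.norm.continuousOn_mul hr).continuousOn_smul (Continuous.continuousOn (by fun_prop)))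
  rw [← sub_smul, norm_smul, norm_eq_abs, smul_eq_mul, ← mul_assoc]
  gcongr
  exact abs_sub_le hε _ _ (hq₀ t (Set.uIoc_subset_uIcc (Set.uIoc_of_le hc ▸ ht)))

variable [CompleteSpace E]

theorem tendsto_integral_linear_smul (ha : a ≠ 0) (hc : c₁ < c₂)
    (hf : IntervalIntegrable f volume c₁ c₂) (hfc : ContinuousWithinAt f (Icc c₁ c₂) c₂) :
    Tendsto (fun ε => ∫ t in c₁..c₂, peakKernel ε (a * (t - c₂)) • f t) (𝓝[>] 0)
      (𝓝 ((π / (2 * |a|)) • f c₂)) := by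
  set m := π / (2 * |a|) with hm
  have hm₀ : 0 < m := by positivity
  have hmass := (tendsto_integral_linear ha hc).const_mul m⁻¹
  rw [← hm, inv_mul_cancel₀ hm₀.ne'] at hmass
  simp only [intervalIntegral.integral_of_le hc.le, ← integral_const_mul] at hmass ⊢
  have hunif (u : Set ℝ) (hu : IsOpen u) (hcu : c₂ ∈ u) :
      TendstoUniformlyOn (fun ε t => m⁻¹ * peakKernel ε (a * (t - c₂))) 0 (𝓝[>] 0)
        (Ioc c₁ c₂ \ u) := by
    have hlin := (tendstoUniformlyOn_linear_zero ha (hu.mem_nhds hcu)).mono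
      fun t (ht : t ∈ Ioc c₁ c₂ \ u) => ht.2
    have hzero : (fun x : ℝ => m⁻¹ • x) ∘ (0 : ℝ → ℝ) = 0 := funext fun _ => mul_zero m⁻¹
    have hscaled := (uniformContinuous_const_smul m⁻¹).comp_tendstoUniformlyOn hlin
    rw [hzero] at hscaled
    exact hscaled
  have hε₀₁ : ∀ᶠ ε : ℝ in 𝓝[>] 0, ε ∈ Ioo 0 1 := Ioo_mem_nhdsGT one_pos
  have hpeak := tendsto_setIntegral_peak_smul_of_integrableOn_of_tendsto measurableSet_Ioc
    measurableSet_Ioc subset_rfl self_mem_nhdsWithin measure_Ioc_lt_top.ne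
    (hε₀₁.mono fun ε hε t _ => mul_nonneg (inv_nonneg.2 hm₀.le) (nonneg hε _))
    hunif hmass
    (hε₀₁.mono fun ε hε =>
      (((peakKernel.continuous hε).comp (by fun_prop)).const_mul m⁻¹).aestronglyMeasurable)
    ((intervalIntegrable_iff_integrableOn_Ioc_of_le hc.le).1 hf)
    (hfc.mono Set.Ioc_subset_Icc_self)
  simpa only [← integral_smul, smul_smul, mul_inv_cancel_left₀ hm₀.ne'] using hpeak.const_smul m

theorem tendsto_integral_sub_mul_smul {q : ℝ → ℝ} (hc : c₁ < c₂) (hq : ContinuousOn q (Icc c₁ c₂))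
    (hq₀ : ∀ t ∈ Icc c₁ c₂, q t ≠ 0)
    (hf : IntervalIntegrable f volume c₁ c₂) (hfc : ContinuousWithinAt f (Icc c₁ c₂) c₂) :
    Tendsto (fun ε => ∫ t in c₁..c₂, peakKernel ε ((t - c₂) * q t) • f t) (𝓝[>] 0)
      (𝓝 ((π / (2 * |q c₂|)) • f c₂)) := by
  have hc₂ : c₂ ∈ Icc c₁ c₂ := Set.right_mem_Icc.2 hc.le
  have ha : q c₂ ≠ 0 := hq₀ c₂ hc₂
  set r : ℝ → ℝ := fun t => |(q c₂ / q t) ^ 2 - 1|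
  have hr : ContinuousOn r (Icc c₁ c₂) :=
    (((continuousOn_const.div hq hq₀).pow 2).sub continuousOn_const).abs
  have hr₀ : r c₂ = 0 := by simp [r, ha]
  have hrf : IntervalIntegrable (fun t => r t * ‖f t‖) volume c₁ c₂ :=
    hf.norm.continuousOn_mul (Set.uIcc_of_le hc.le ▸ hr)
  have hlin := tendsto_integral_linear_smul ha hc hf hfc
  have hbound := tendsto_integral_linear_smul ha hc hrf ((hr c₂ hc₂).mul hfc.norm)
  rw [hr₀, zero_mul, smul_zero] at hbound
  have hdiff : Tendsto (fun ε => (∫ t in c₁..c₂, peakKernel ε ((t - c₂) * q t) • f t) -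
      ∫ t in c₁..c₂, peakKernel ε (q c₂ * (t - c₂)) • f t) (𝓝[>] 0) (𝓝 0) := by
    refine squeeze_zero_norm' ?_ hbound
    filter_upwards [Ioo_mem_nhdsGT one_pos] with ε hε
    exact norm_integral_sub_mul_smul_sub_le hε hc.le _ hq hq₀ hf
  simpa using hdiff.add hlin

end peakKernel

lemma exists_continuousOn_sub_eq_sub_smul {𝕜 F : Type*} [NontriviallyNormedField 𝕜]
    [NormedAddCommGroup F] [NormedSpace 𝕜 F] {ψ : 𝕜 → F} {s : Set 𝕜} {c : 𝕜} {a : F}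
    (hψ : ContinuousOn ψ s) (hd : HasDerivWithinAt ψ a s c) :
    ∃ q : 𝕜 → F, ContinuousOn q s ∧ q c = a ∧ ∀ t, ψ t - ψ c = (t - c) • q t := by
  classical
  refine ⟨Function.update (slope ψ c) c a, ?_, Function.update_self .., fun t => ?_⟩
  · refine continuousOn_update_iff.2 ⟨?_, fun _ => hasDerivWithinAt_iff_tendsto_slope.1 hd⟩
    have hinv : ContinuousOn (fun t => (t - c)⁻¹) (s \ {c}) :=
      ContinuousOn.inv₀ (by fun_prop) fun t ht => sub_ne_zero.2 ht.2
    exact hinv.smul ((hψ.mono Set.sdiff_subset).sub continuousOn_const)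
  · obtain rfl | ht := eq_or_ne t c
    · simp
    · rw [Function.update_of_ne ht, sub_smul_slope, vsub_eq_sub]

lemma injOn_of_hasDerivAt_ne_zero {g g' : ℝ → ℝ} {s : Set ℝ} (hs : s.OrdConnected)
    (hg : ∀ t ∈ s, HasDerivAt g (g' t) t) (hg' : ∀ t ∈ s, g' t ≠ 0) : s.InjOn g := by
  intro x hx y hy heq
  by_contra hne
  wlog hxy : x < y generalizing x y
  · exact this hy hx heq.symm (Ne.symm hne) ((Ne.lt_or_gt hne).resolve_left hxy)
  have hsub : Icc x y ⊆ s := hs.out hx hy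
  have hsub' : Ioo x y ⊆ s := Set.Ioo_subset_Icc_self.trans hsub
  obtain ⟨t, ht, hzero⟩ := exists_hasDerivAt_eq_zero hxy
    ((HasDerivAt.continuousOn hg).mono hsub) heq fun t ht => hg t (hsub' ht)
  exact hg' t (hsub' ht) hzero

theorem stmt_10_general {E : Type*} [NormedAddCommGroup E] [NormedSpace ℝ E] [CompleteSpace E]
    {c₁ c₂ a : ℝ} (hc : c₁ < c₂) {f : ℝ → E} {ψ : ℝ → ℝ}
    (hf : IntervalIntegrable f volume c₁ c₂) (hfc : ContinuousWithinAt f (Icc c₁ c₂) c₂)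
    (hψ : ContinuousOn ψ (Icc c₁ c₂)) (hψ₀ : ∀ t ∈ Ico c₁ c₂, ψ t ≠ 0) (hψc₂ : ψ c₂ = 0)
    (hd : HasDerivWithinAt ψ a (Icc c₁ c₂) c₂) (ha : a ≠ 0) :
    Tendsto (fun ε : ℝ => ∫ t in c₁..c₂, (√ε / (ε + (1 - ε) * ψ t ^ 2)) • f t) (𝓝[>] 0)
      (𝓝 ((π / (2 * |a|)) • f c₂)) := by
  obtain ⟨q, hq, rfl, hψq⟩ := exists_continuousOn_sub_eq_sub_smul hψ hd
  simp only [hψc₂, sub_zero, smul_eq_mul] at hψq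
  have hq₀ : ∀ t ∈ Icc c₁ c₂, q t ≠ 0 := by
    intro t ht
    obtain rfl | htc := ht.2.eq_or_lt
    · exact ha
    · exact right_ne_zero_of_mul (hψq t ▸ hψ₀ t ⟨ht.1, htc⟩)
  simpa only [peakKernel, ← hψq] using peakKernel.tendsto_integral_sub_mul_smul hc hq hq₀ hf hfc

theorem stmt_10 (c₁ c₂ : ℝ) (hc : c₁ < c₂) (f ψ ψ' : ℝ → ℝ)
    (hf : ContinuousOn f (Set.Icc c₁ c₂))
    (hψ : ∀ t ∈ Set.Icc c₁ c₂, HasDerivAt ψ (ψ' t) t)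
    (hψ' : ContinuousOn ψ' (Set.Icc c₁ c₂))
    (hψc₂ : ψ c₂ = 0) (hψ'0 : ∀ t ∈ Set.Icc c₁ c₂, ψ' t ≠ 0) :
    Tendsto (fun ε : ℝ => ∫ t in c₁..c₂, Real.sqrt ε * f t / (ε + (1 - ε) * ψ t ^ 2))
      (nhdsWithin 0 (Set.Ioi 0)) (nhds (π / 2 * f c₂ / |ψ' c₂|)) := by
  have hc₂ : c₂ ∈ Icc c₁ c₂ := Set.right_mem_Icc.2 hc.le
  have hψ₀ (t : ℝ) (ht : t ∈ Ico c₁ c₂) : ψ t ≠ 0 := fun h => ht.2.ne <|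
    injOn_of_hasDerivAt_ne_zero Set.ordConnected_Icc hψ hψ'0 (Set.Ico_subset_Icc_self ht) hc₂
      (h.trans hψc₂.symm)
  convert stmt_10_general hc (hf.intervalIntegrable_of_Icc hc.le) (hf c₂ hc₂)
    (HasDerivAt.continuousOn hψ) hψ₀ hψc₂ (hψ c₂ hc₂).hasDerivWithinAt (hψ'0 c₂ hc₂) using 2
  · simp only [smul_eq_mul, div_mul_eq_mul_div]
  · rw [smul_eq_mul]
    field_simp
end
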